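/- Positive special decomposition: a braid β ∈ B_∞ admits a decomposition β = β₁ · sh(β₂) ⋯ sh^{n−1}(βₙ) in which every βᵢ is a special positive braid if and only if β is a positive simple braid, i.e., there exists an integer n such that β is a left divisor of Garside's fundamental braid Δ_n in the positive braid monoid B_∞^+ (there exists a positive braid γ with β · γ = Δ_n, where Δ_n := (σ₁ σ₂ ⋯ σ_{n−1})(σ₁ ⋯ σ_{n−2}) ⋯ (σ₁)). -/

import Mathlib

/-- The braid relations on generators indexed by `ℕ` (generator `i` stands for
the Artin generator `σ_{i+1}` of the paper). -/
def braidRels : Set (FreeGroup ℕ) :=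
  {r | (∃ i j : ℕ, i + 2 ≤ j ∧
          r = .of i * .of j * (.of i)⁻¹ * (.of j)⁻¹) ∨
       (∃ i : ℕ,
          r = .of i * .of (i + 1) * .of i *
              (.of (i + 1) * .of i * .of (i + 1))⁻¹)}

/-- The braid group on infinitely many strands. -/
abbrev Binf : Type := PresentedGroup braidRels

/-- `σ i` is the Artin generator `σ_{i+1}` of the paper (0-indexed). -/
def σ (i : ℕ) : Binf := PresentedGroup.of i

lemma mk_rel_eq_one {r : FreeGroup ℕ} (h : r ∈ braidRels) :
    PresentedGroup.mk braidRels r = 1 :=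
  (QuotientGroup.eq_one_iff r).mpr (Subgroup.subset_normalClosure h)

lemma shift_lift_eq_one :
    ∀ r ∈ braidRels, FreeGroup.lift (fun n => σ (n + 1)) r = 1 := by
  intro r hr
  have key : ∀ s ∈ braidRels, FreeGroup.lift (fun n => σ (n + 1)) s
      = PresentedGroup.mk braidRels (FreeGroup.map (· + 1) s) := by
    intro s _
    have : (FreeGroup.lift (fun n => σ (n + 1)) : FreeGroup ℕ →* Binf)
        = (PresentedGroup.mk braidRels).comp (FreeGroup.map (· + 1)) := by
      apply FreeGroup.ext_hom
      intro x
      simp [σ, PresentedGroup.of]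
    rw [this]; rfl
  rw [key r hr]
  apply mk_rel_eq_one
  rcases hr with ⟨i, j, hij, rfl⟩ | ⟨i, rfl⟩
  · exact Or.inl ⟨i + 1, j + 1, by omega, by simp⟩
  · exact Or.inr ⟨i + 1, by simp⟩

/-- The shift endomorphism of the braid group, mapping `σ i` to `σ (i+1)`. -/
def sh : Binf →* Binf := PresentedGroup.toGroup shift_lift_eq_one

@[simp] lemma sh_σ (i : ℕ) : sh (σ i) = σ (i + 1) :=
  PresentedGroup.toGroup.of shift_lift_eq_one

/-- The shifted-conjugation (selfdistributive) operation on `Binf`: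
`β₁ ▷ β₂ = β₁ · sh β₂ · σ₁ · (sh β₁)⁻¹`. -/
def sc (β₁ β₂ : Binf) : Binf := β₁ * sh β₂ * σ 0 * (sh β₁)⁻¹

/-- The set of special braids: the smallest subset of `Binf` containing the
unit braid and closed under the shifted-conjugation operation `sc`. -/
def Special : Set Binf :=
  {x | ∀ P : Binf → Prop, P 1 → (∀ a b, P a → P b → P (sc a b)) → P x}

/-- The shifted product `∏^sh(β₁, …, βₙ) = β₁ · sh β₂ ⋯ sh^{n-1} βₙ`. -/
def shProd : List Binf → Binf
  | [] => 1
  | a :: t => a * sh (shProd t)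

/-- The monoid of positive braids: the submonoid of `Binf` generated by all
the generators `σ i`. -/
def BPos : Submonoid Binf := Submonoid.closure (Set.range σ)

/-- `ascProd m = σ 0 * σ 1 * ⋯ * σ (m-1)`, the paper's `σ₁ σ₂ ⋯ σ_m`. -/
def ascProd (m : ℕ) : Binf := ((List.range m).map σ).prod

/-- Garside's fundamental braid
`Δ_n = (σ₁ ⋯ σ_{n-1}) (σ₁ ⋯ σ_{n-2}) ⋯ (σ₁)`. -/
def Δ : ℕ → Binf
  | 0 => 1
  | n + 1 => ascProd n * Δ n

/-! Basic braid relations -/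

lemma σ_comm {i j : ℕ} (h : i + 2 ≤ j) : σ i * σ j = σ j * σ i := by
  have h1 := mk_rel_eq_one (r := .of i * .of j * (.of i)⁻¹ * (.of j)⁻¹) (Or.inl ⟨i, j, h, rfl⟩)
  simp only [map_mul, map_inv] at h1
  exact mul_inv_eq_iff_eq_mul.mp (mul_inv_eq_one.mp h1)

lemma σ_braid (i : ℕ) : σ i * σ (i + 1) * σ i = σ (i + 1) * σ i * σ (i + 1) := by
  have h1 := mk_rel_eq_one (r := .of i * .of (i + 1) * .of i *
              (.of (i + 1) * .of i * .of (i + 1))⁻¹) (Or.inr ⟨i, rfl⟩)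
  rw [map_mul, map_inv] at h1
  have h2 := mul_inv_eq_one.mp h1
  simp only [map_mul] at h2
  exact h2

lemma σ_zero_comm (y : Binf) : σ 0 * sh (sh y) = sh (sh y) * σ 0 := by
  have : ((MulAut.conj (σ 0)).toMonoidHom.comp (sh.comp sh)) = sh.comp sh := by
    apply PresentedGroup.ext
    intro i
    change σ 0 * sh (sh (σ i)) * (σ 0)⁻¹ = sh (sh (σ i))
    rw [sh_σ, sh_σ, σ_comm (by omega), mul_inv_cancel_right]
  have h := DFunLike.congr_fun this y
  change σ 0 * sh (sh y) * (σ 0)⁻¹ = sh (sh y) at h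
  exact mul_inv_eq_iff_eq_mul.mp h

lemma σ_mem (i : ℕ) : σ i ∈ BPos := Submonoid.subset_closure ⟨i, rfl⟩

lemma sh_mem {x : Binf} (h : x ∈ BPos) : sh x ∈ BPos := by
  induction h using Submonoid.closure_induction with
  | mem x hx => obtain ⟨i, rfl⟩ := hx; rw [sh_σ]; exact σ_mem _
  | one => rw [map_one]; exact one_mem _
  | mul x y _ _ hx hy => rw [map_mul]; exact mul_mem hx hy

/-! Ascending products and Δ -/

lemma asc_zero : ascProd 0 = 1 := by simp [ascProd]

lemma asc_succ (n : ℕ) : ascProd (n + 1) = ascProd n * σ n := by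
  simp [ascProd, List.range_succ]

lemma asc_succ' (n : ℕ) : ascProd (n + 1) = σ 0 * sh (ascProd n) := by
  induction n with
  | zero => simp [asc_succ, asc_zero]
  | succ n ih =>
    have e : sh (ascProd (n + 1)) = sh (ascProd n) * σ (n + 1) := by
      rw [asc_succ, map_mul, sh_σ]
    rw [asc_succ (n + 1), e, ih, mul_assoc]

lemma asc_mem (n : ℕ) : ascProd n ∈ BPos := by
  induction n with
  | zero => rw [asc_zero]; exact one_mem _
  | succ n ih => rw [asc_succ]; exact mul_mem ih (σ_mem _)

lemma Δ_mem (n : ℕ) : Δ n ∈ BPos := by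
  induction n with
  | zero => exact one_mem _
  | succ n ih => exact mul_mem (asc_mem n) ih

lemma asc_comm {n j : ℕ} (h : n + 1 ≤ j) : σ j * ascProd n = ascProd n * σ j := by
  induction n with
  | zero => simp [asc_zero]
  | succ n ih =>
    rw [asc_succ, ← mul_assoc, ih (by omega), mul_assoc, mul_assoc,
      σ_comm (show n + 2 ≤ j by omega)]

lemma asc_conj {i n : ℕ} (h : i + 2 ≤ n) : σ (i + 1) * ascProd n = ascProd n * σ i := by
  induction n, h using Nat.le_induction with
  | base =>
    rw [asc_succ, asc_succ, ← mul_assoc, ← mul_assoc, asc_comm (by omega)]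
    have := σ_braid i
    simp only [mul_assoc] at this ⊢
    rw [this]
  | succ n hn ih =>
    rw [asc_succ, ← mul_assoc, ih, mul_assoc, mul_assoc, σ_comm (by omega)]

lemma asc_asc {m n : ℕ} (h : m < n) : sh (ascProd m) * ascProd n = ascProd n * ascProd m := by
  induction m with
  | zero => simp [asc_zero]
  | succ m ih =>
    rw [asc_succ, map_mul, sh_σ, mul_assoc, asc_conj (by omega), ← mul_assoc, ih (by omega),
      mul_assoc]

lemma asc_Δ {m n : ℕ} (h : m ≤ n) : sh (Δ m) * ascProd n = ascProd n * Δ m := by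
  induction m with
  | zero => simp [Δ]
  | succ m ih =>
    rw [Δ, map_mul, mul_assoc, ih (by omega), ← mul_assoc, asc_asc (by omega), mul_assoc]

/-! Descending products -/

/-- `desc k = σ (k-1) ⋯ σ 0`. -/
def desc : ℕ → Binf
  | 0 => 1
  | k + 1 => σ k * desc k

lemma desc_succ' (n : ℕ) : desc (n + 1) = sh (desc n) * σ 0 := by
  induction n with
  | zero => simp [desc]
  | succ n ih =>
    have e : sh (desc (n + 1)) = σ (n + 1) * sh (desc n) := by
      rw [desc, map_mul, sh_σ]
    rw [desc, e, ih, mul_assoc]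

lemma desc_mem (n : ℕ) : desc n ∈ BPos := by
  induction n with
  | zero => exact one_mem _
  | succ n ih => exact mul_mem (σ_mem _) ih

lemma desc_comm {n j : ℕ} (h : n + 1 ≤ j) : σ j * desc n = desc n * σ j := by
  induction n with
  | zero => simp [desc]
  | succ n ih =>
    rw [desc, ← mul_assoc, ← σ_comm (by omega), mul_assoc, ih (by omega), mul_assoc]

lemma desc_conj {i n : ℕ} (h : i + 2 ≤ n) : σ i * desc n = desc n * σ (i + 1) := by
  induction n, h using Nat.le_induction with
  | base =>
    rw [desc, desc, ← mul_assoc, ← mul_assoc, σ_braid, mul_assoc, desc_comm (by omega)]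
    simp only [mul_assoc]
  | succ n hn ih =>
    rw [desc, ← mul_assoc, σ_comm (by omega), mul_assoc, ih, mul_assoc]

lemma desc_desc {m n : ℕ} (h : m < n) : desc m * desc n = desc n * sh (desc m) := by
  induction m with
  | zero => simp [desc]
  | succ m ih =>
    rw [desc, map_mul, sh_σ, mul_assoc, ih (by omega), ← mul_assoc, desc_conj (by omega),
      mul_assoc]

lemma desc_special (k : ℕ) : desc k ∈ Special := by
  intro P h1 h2
  induction k with
  | zero => exact h1
  | succ k ih =>
    have := h2 1 (desc k) h1 ih
    rwa [sc, one_mul, map_one, inv_one, mul_one, ← desc_succ'] at this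

lemma desc_Δ {k n : ℕ} (h : k ≤ n) : desc k * sh (Δ n) * ascProd (n - k) = Δ (n + 1) := by
  induction n generalizing k with
  | zero => obtain rfl : k = 0 := by omega
            simp [desc, Δ, asc_zero]
  | succ n ih =>
    have h0 : ∀ m, sh (Δ m) * ascProd m = Δ (m + 1) := fun m => by
      rw [asc_Δ le_rfl, Δ]
    cases k with
    | zero => simp only [desc, one_mul, Nat.sub_zero]; exact h0 _
    | succ k =>
      rw [Nat.add_sub_add_right, desc_succ', ← h0 n, map_mul]
      have e1 : sh (desc k) * σ 0 * (sh (sh (Δ n)) * sh (ascProd n)) * ascProd (n - k)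
          = sh (desc k) * sh (sh (Δ n)) * (σ 0 * sh (ascProd n) * ascProd (n - k)) := by
        have := σ_zero_comm (Δ n)
        simp only [mul_assoc]
        rw [← mul_assoc (σ 0), this]
        simp only [mul_assoc]
      rw [e1, ← asc_succ', ← asc_asc (by omega), ← mul_assoc, ← map_mul, ← map_mul,
        ih (by omega), h0]

/-! Simple braids as shifted products of descending products -/

/-- Shifted products of descending products. -/
inductive Simp' : Binf → Prop
  | one : Simp' 1
  | step (k : ℕ) (x : Binf) : Simp' x → Simp' (desc k * sh x)

lemma Simp'.pos {x : Binf} (h : Simp' x) : x ∈ BPos := by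
  induction h with
  | one => exact one_mem _
  | step k x _ ih => exact mul_mem (desc_mem k) (sh_mem ih)

lemma Simp'.div {x : Binf} (h : Simp' x) :
    ∃ N, ∀ n, N ≤ n → ∃ γ ∈ BPos, x * γ = Δ n := by
  induction h with
  | one => exact ⟨0, fun n _ => ⟨Δ n, Δ_mem n, one_mul _⟩⟩
  | step k x _ ih =>
    obtain ⟨N, hN⟩ := ih
    refine ⟨max N k + 1, fun n hn => ?_⟩
    obtain ⟨n, rfl⟩ : ∃ m, n = m + 1 := ⟨n - 1, by omega⟩
    obtain ⟨γ, hγ, e⟩ := hN n (by omega)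
    refine ⟨sh γ * ascProd (n - k), mul_mem (sh_mem hγ) (asc_mem _), ?_⟩
    rw [← desc_Δ (show k ≤ n by omega), ← e, map_mul]
    simp only [mul_assoc]

lemma Simp'.cases {x : Binf} (h : Simp' x) : ∃ k y, Simp' y ∧ x = desc k * sh y := by
  cases h with
  | one => exact ⟨0, 1, .one, by simp [desc]⟩
  | step k y hy => exact ⟨k, y, hy, rfl⟩

lemma Simp'.sigma (i : ℕ) : Simp' (σ i) := by
  induction i with
  | zero =>
    have := Simp'.step 1 1 .one
    simpa [desc] using this
  | succ i ih =>
    have := Simp'.step 0 _ ih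
    simpa [desc] using this

lemma Simp'.exchange {x : Binf} (h : Simp' x) (i : ℕ) :
    Simp' (x * σ i) ∨ ∃ y ∈ BPos, x = y * σ i := by
  induction h generalizing i with
  | one => left; rw [one_mul]; exact Simp'.sigma i
  | step k x hx ih =>
    cases i with
    | succ i =>
      rcases ih i with h | ⟨y, hy, e⟩
      · left
        have := Simp'.step k _ h
        rwa [map_mul, sh_σ, ← mul_assoc] at this
      · right
        exact ⟨desc k * sh y, mul_mem (desc_mem k) (sh_mem hy), by
          rw [e, map_mul, sh_σ, mul_assoc]⟩
    | zero =>
      obtain ⟨m, y, hy, rfl⟩ := hx.cases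
      rcases Nat.lt_or_ge m k with hmk | hmk
      · right
        obtain ⟨k, rfl⟩ : ∃ j, k = j + 1 := ⟨k - 1, by omega⟩
        refine ⟨desc m * sh (desc k) * sh (sh y),
          mul_mem (mul_mem (desc_mem _) (sh_mem (desc_mem _))) (sh_mem (sh_mem hy.pos)), ?_⟩
        rw [map_mul, ← mul_assoc, ← desc_desc hmk, desc_succ', mul_assoc _ _ (σ 0),
          ← σ_zero_comm]
        simp only [mul_assoc]
      · left
        have e : desc k * sh (desc m * sh y) * σ 0
            = desc (m + 1) * sh (desc k * sh y) := by
          rw [map_mul, map_mul, ← mul_assoc (desc (m + 1)), ← desc_desc (by omega), desc_succ',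
            ← mul_assoc, mul_assoc _ _ (σ 0), ← σ_zero_comm]
          simp only [mul_assoc]
        rw [e]
        exact .step _ _ (.step _ _ hy)

/-! The depth action -/

/-- inverse of the action of `σ i` for the rack `a ▷ b = b + 1` on `ℤ`. -/
def dE (i : ℕ) : Equiv.Perm (ℕ → ℤ) where
  toFun s x := if x = i then s (i + 1) else if x = i + 1 then s i - 1 else s x
  invFun s x := if x = i then s (i + 1) + 1 else if x = i + 1 then s i else s x
  left_inv s := by ext x; grind
  right_inv s := by ext x; grind

lemma dE_apply (i : ℕ) (s : ℕ → ℤ) (x : ℕ) :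
    dE i s x = if x = i then s (i + 1) else if x = i + 1 then s i - 1 else s x := rfl

lemma dE_rels : ∀ r ∈ braidRels, FreeGroup.lift dE r = 1 := by
  rintro r (⟨i, j, h, rfl⟩ | ⟨i, rfl⟩)
  · simp only [map_mul, map_inv, FreeGroup.lift_apply_of]
    rw [mul_inv_eq_one, mul_inv_eq_iff_eq_mul]
    ext s x
    simp only [Equiv.Perm.mul_apply, dE_apply]
    grind
  · simp only [map_mul, map_inv, FreeGroup.lift_apply_of]
    rw [mul_inv_eq_one]
    ext s x
    simp only [Equiv.Perm.mul_apply, dE_apply]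
    grind

/-- the depth action -/
def dep : Binf →* Equiv.Perm (ℕ → ℤ) := PresentedGroup.toGroup dE_rels

lemma dep_σ (i : ℕ) : dep (σ i) = dE i := PresentedGroup.toGroup.of dE_rels

/-- The shift of a permutation of sequences. -/
def shE : Equiv.Perm (ℕ → ℤ) →* Equiv.Perm (ℕ → ℤ) where
  toFun e :=
    { toFun := fun s x => Nat.casesOn x (s 0) (e (fun y => s (y + 1)))
      invFun := fun s x => Nat.casesOn x (s 0) (e.symm (fun y => s (y + 1)))
      left_inv := fun s => by ext x; cases x <;> simp
      right_inv := fun s => by ext x; cases x <;> simp }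
  map_one' := by ext s x; cases x <;> simp
  map_mul' a b := by ext s x; cases x <;> simp

lemma shE_zero (e : Equiv.Perm (ℕ → ℤ)) (s : ℕ → ℤ) : shE e s 0 = s 0 := rfl

lemma shE_succ (e : Equiv.Perm (ℕ → ℤ)) (s : ℕ → ℤ) (x : ℕ) :
    shE e s (x + 1) = e (fun y => s (y + 1)) x := rfl

lemma dep_sh (β : Binf) : dep (sh β) = shE (dep β) := by
  have : dep.comp sh = shE.comp dep := by
    apply PresentedGroup.ext
    intro i
    change dep (sh (σ i)) = shE (dep (σ i))
    rw [sh_σ, dep_σ, dep_σ]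
    ext s x
    cases x with
    | zero => rw [shE_zero, dE_apply]; simp
    | succ x => rw [shE_succ, dE_apply, dE_apply]; simp
  exact DFunLike.congr_fun this β

/-- `k` at position `j`, zero elsewhere. -/
def pt (j : ℕ) (k : ℤ) : ℕ → ℤ := fun x => if x = j then k else 0

lemma special_dep {β : Binf} (h : β ∈ Special) : ∃ k, dep β (pt 0 k) = 0 := by
  apply h (fun β => ∃ k, dep β (pt 0 k) = 0)
  · exact ⟨0, by ext x; simp [pt]⟩
  · rintro a b ⟨p, hp⟩ ⟨q, hq⟩
    refine ⟨q + 1, ?_⟩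
    rw [sc]
    simp only [map_mul, map_inv, Equiv.Perm.mul_apply, dep_sh, dep_σ]
    have e1 : (shE (dep a))⁻¹ (pt 0 (q + 1)) = fun x => if x = 0 then q + 1 else if x = 1 then p else 0 := by
      rw [Equiv.Perm.inv_eq_iff_eq]
      ext x
      cases x with
      | zero => simp [shE_zero, pt]
      | succ x =>
        rw [shE_succ]
        have : (fun y : ℕ => if y + 1 = 0 then q + 1 else if y + 1 = 1 then p else 0) = pt 0 p := by
          ext y; simp [pt]
        rw [this, hp]
        simp [pt]
    have e2 : dE 0 (fun x => if x = 0 then q + 1 else if x = 1 then p else 0)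
        = fun x => if x = 0 then p else if x = 1 then q else 0 := by
      ext x
      rw [dE_apply]
      grind
    have e3 : shE (dep b) (fun x => if x = 0 then p else if x = 1 then q else 0) = pt 0 p := by
      ext x
      cases x with
      | zero => simp [shE_zero, pt]
      | succ x =>
        rw [shE_succ]
        have : (fun y : ℕ => if y + 1 = 0 then p else if y + 1 = 1 then q else 0) = pt 0 q := by
          ext y; simp [pt]
        rw [this, hq]
        simp [pt]
    rw [e1, e2, e3, hp]

lemma pos_dep_nonneg {β : Binf} (h : β ∈ BPos) : ∀ s, dep β s = 0 → ∀ x, 0 ≤ s x := by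
  induction h using Submonoid.closure_induction_right with
  | one => intro s hs x; simp only [map_one, Equiv.Perm.one_apply] at hs; simp [hs]
  | mul_right β _ y hy ih =>
    obtain ⟨i, rfl⟩ := hy
    intro s hs x
    rw [map_mul, Equiv.Perm.mul_apply, dep_σ] at hs
    have h1 := ih _ hs
    have a := h1 x
    have b := h1 i
    have c := h1 (i + 1)
    simp only [dE_apply] at a b c
    grind

lemma pos_dep {β : Binf} (h : β ∈ BPos) : ∀ j k, dep β (pt j k) = 0 →
    ∃ m : ℕ, desc j * 1 = desc j ∧ β * desc j = desc (j + m) ∧ k = m := by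
  induction h using Submonoid.closure_induction_right with
  | one =>
    intro j k hs
    have := congrFun hs j
    simp only [map_one, Equiv.Perm.one_apply, pt, if_true, Pi.zero_apply] at this
    exact ⟨0, by simp, by simp, by simpa using this⟩
  | mul_right β hβ y hy ih =>
    obtain ⟨i, rfl⟩ := hy
    intro j k hs
    rw [map_mul, Equiv.Perm.mul_apply, dep_σ] at hs
    have h1 := pos_dep_nonneg hβ _ hs (i + 1)
    have hij : i = j := by
      by_contra hne
      simp [dE_apply, pt, hne] at h1
    subst hij
    have e : dE i (pt i k) = pt (i + 1) (k - 1) := by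
      ext x
      simp only [dE_apply, pt]
      grind
    rw [e] at hs
    obtain ⟨m, _, h2, h3⟩ := ih _ _ hs
    refine ⟨m + 1, by simp, ?_, by push_cast; omega⟩
    rw [mul_assoc, ← desc, h2]
    congr 1
    omega

lemma special_pos {β : Binf} (h : β ∈ Special) (h' : β ∈ BPos) : ∃ k, β = desc k := by
  obtain ⟨k, hk⟩ := special_dep h
  obtain ⟨m, _, h2, _⟩ := pos_dep h' 0 k hk
  exact ⟨0 + m, by simpa [desc] using h2⟩

/-! The linking action -/

/-- action of `σ i` on labelled positions together with a weighted crossing count -/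
def lE (i : ℕ) : Equiv.Perm ((ℕ → ℤ) × ℤ) where
  toFun s := (fun x => if x = i then s.1 (i + 1) else if x = i + 1 then s.1 i else s.1 x,
    s.2 + s.1 i * s.1 (i + 1))
  invFun s := (fun x => if x = i then s.1 (i + 1) else if x = i + 1 then s.1 i else s.1 x,
    s.2 - s.1 i * s.1 (i + 1))
  left_inv s := by
    refine Prod.ext ?_ ?_
    · ext x; grind
    · simp; ring
  right_inv s := by
    refine Prod.ext ?_ ?_
    · ext x; grind
    · simp; ring

lemma lE_fst (i : ℕ) (s : (ℕ → ℤ) × ℤ) (x : ℕ) : (lE i s).1 x =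
    if x = i then s.1 (i + 1) else if x = i + 1 then s.1 i else s.1 x := rfl

lemma lE_snd (i : ℕ) (s : (ℕ → ℤ) × ℤ) : (lE i s).2 = s.2 + s.1 i * s.1 (i + 1) := rfl

lemma lE_rels : ∀ r ∈ braidRels, FreeGroup.lift lE r = 1 := by
  rintro r (⟨i, j, h, rfl⟩ | ⟨i, rfl⟩)
  · simp only [map_mul, map_inv, FreeGroup.lift_apply_of]
    rw [mul_inv_eq_one, mul_inv_eq_iff_eq_mul]
    refine Equiv.ext fun s => Prod.ext ?_ ?_
    · ext x
      simp only [Equiv.Perm.mul_apply, lE_fst]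
      grind
    · simp only [Equiv.Perm.mul_apply, lE_fst, lE_snd]
      grind
  · simp only [map_mul, map_inv, FreeGroup.lift_apply_of]
    rw [mul_inv_eq_one]
    refine Equiv.ext fun s => Prod.ext ?_ ?_
    · ext x
      simp only [Equiv.Perm.mul_apply, lE_fst]
      grind
    · simp only [Equiv.Perm.mul_apply, lE_fst, lE_snd]
      grind

/-- the linking action -/
def lk : Binf →* Equiv.Perm ((ℕ → ℤ) × ℤ) := PresentedGroup.toGroup lE_rels

lemma lk_σ (i : ℕ) : lk (σ i) = lE i := PresentedGroup.toGroup.of lE_rels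

lemma lk_asc (n : ℕ) (s : (ℕ → ℤ) × ℤ) :
    (lk (ascProd n) s).1 0 = s.1 n ∧ (∀ x < n, (lk (ascProd n) s).1 (x + 1) = s.1 x) ∧
    (∀ x, n < x → (lk (ascProd n) s).1 x = s.1 x) ∧
    (lk (ascProd n) s).2 = s.2 + s.1 n * ∑ x ∈ Finset.range n, s.1 x := by
  induction n generalizing s with
  | zero => simp [asc_zero]
  | succ n ih =>
    rw [asc_succ, map_mul, Equiv.Perm.mul_apply, lk_σ]
    obtain ⟨h1, h2, h3, h4⟩ := ih (lE n s)
    refine ⟨?_, ?_, ?_, ?_⟩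
    · rw [h1, lE_fst]; simp
    · intro x hx
      rcases Nat.lt_succ_iff_lt_or_eq.mp hx with h | rfl
      · rw [h2 x h, lE_fst]; grind
      · rw [h3 _ (by omega), lE_fst]; grind
    · intro x hx
      rw [h3 x (by omega), lE_fst]; grind
    · rw [h4, lE_snd, lE_fst, Finset.sum_range_succ]
      have : ∑ x ∈ Finset.range n, (lE n s).1 x = ∑ x ∈ Finset.range n, s.1 x := by
        refine Finset.sum_congr rfl fun x hx => ?_
        have := Finset.mem_range.mp hx
        rw [lE_fst]; grind
      rw [this, if_pos rfl]
      ring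

lemma lk_Δ (n : ℕ) (s : (ℕ → ℤ) × ℤ) :
    (∀ x, n ≤ x → (lk (Δ n) s).1 x = s.1 x) ∧
    (∑ x ∈ Finset.range n, (lk (Δ n) s).1 x = ∑ x ∈ Finset.range n, s.1 x) ∧
    2 * (lk (Δ n) s).2 = 2 * s.2 + (∑ x ∈ Finset.range n, s.1 x) ^ 2
      - ∑ x ∈ Finset.range n, s.1 x ^ 2 := by
  induction n with
  | zero => simp [Δ]
  | succ n ih =>
    rw [Δ, map_mul, Equiv.Perm.mul_apply]
    obtain ⟨h1, h2, h3⟩ := ih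
    obtain ⟨k1, k2, k3, k4⟩ := lk_asc n (lk (Δ n) s)
    refine ⟨?_, ?_, ?_⟩
    · intro x hx
      rw [k3 x (by omega), h1 x (by omega)]
    · rw [Finset.sum_range_succ', k1, Finset.sum_range_succ, h1 n le_rfl, ← h2]
      congr 1
      exact Finset.sum_congr rfl fun x hx => k2 x (Finset.mem_range.mp hx)
    · rw [k4, h2, h1 n le_rfl, mul_add, h3, Finset.sum_range_succ, Finset.sum_range_succ]
      ring

/-- indicator of a two-element set -/
def ind (a b : ℕ) : ℕ → ℤ := fun x => if x = a ∨ x = b then 1 else 0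

lemma lE_ind (i a b : ℕ) (hab : a ≠ b) (c : ℤ) :
    ∃ a' b' c', a' ≠ b' ∧ c ≤ c' ∧ lE i (ind a b, c) = (ind a' b', c') := by
  refine ⟨Equiv.swap i (i + 1) a, Equiv.swap i (i + 1) b,
    c + ind a b i * ind a b (i + 1), by simpa using hab, ?_,
    Prod.ext ?_ rfl⟩
  · have : 0 ≤ ind a b i * ind a b (i + 1) := by
      unfold ind; split_ifs <;> simp
    simpa using this
  · ext x
    rw [lE_fst]
    simp only [ind, Equiv.swap_apply_def]
    grind

lemma lE_ind' (i a b : ℕ) (hab : a ≠ b) (c : ℤ) :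
    ∃ a' b' c', a' ≠ b' ∧ c' ≤ c ∧ lE i (ind a' b', c') = (ind a b, c) := by
  refine ⟨Equiv.swap i (i + 1) a, Equiv.swap i (i + 1) b,
    c - ind (Equiv.swap i (i + 1) a) (Equiv.swap i (i + 1) b) i *
      ind (Equiv.swap i (i + 1) a) (Equiv.swap i (i + 1) b) (i + 1), by simpa using hab, ?_,
    Prod.ext ?_ (by rw [lE_snd]; simp)⟩
  · have : ∀ a b, 0 ≤ ind a b i * ind a b (i + 1) := by
      intro a b
      unfold ind; split_ifs <;> simp
    have := this (Equiv.swap i (i + 1) a) (Equiv.swap i (i + 1) b)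
    omega
  · ext x
    rw [lE_fst]
    simp only [ind, Equiv.swap_apply_def]
    grind

lemma lk_pos {β : Binf} (h : β ∈ BPos) : ∀ a b c, a ≠ b → 
    ∃ a' b' c', a' ≠ b' ∧ c ≤ c' ∧ lk β (ind a b, c) = (ind a' b', c') := by
  induction h using Submonoid.closure_induction_right with
  | one => intro a b c h; exact ⟨a, b, c, h, le_rfl, by simp⟩
  | mul_right β _ y hy ih =>
    obtain ⟨i, rfl⟩ := hy
    intro a b c h
    obtain ⟨a', b', c', h1, h2, h3⟩ := lE_ind i a b h c
    obtain ⟨a'', b'', c'', k1, k2, k3⟩ := ih a' b' c' h1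
    exact ⟨a'', b'', c'', k1, h2.trans k2, by
      rw [map_mul, Equiv.Perm.mul_apply, lk_σ, h3, k3]⟩

lemma lk_pos' {β : Binf} (h : β ∈ BPos) : ∀ a b c, a ≠ b → 
    ∃ a' b' c', a' ≠ b' ∧ c' ≤ c ∧ lk β (ind a' b', c') = (ind a b, c) := by
  induction h using Submonoid.closure_induction_left with
  | one => intro a b c h; exact ⟨a, b, c, h, le_rfl, by simp⟩
  | mul_left y hy β _ ih =>
    obtain ⟨i, rfl⟩ := hy
    intro a b c h
    obtain ⟨a', b', c', h1, h2, h3⟩ := lE_ind' i a b h c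
    obtain ⟨a'', b'', c'', k1, k2, k3⟩ := ih a' b' c' h1
    exact ⟨a'', b'', c'', k1, k2.trans h2, by
      rw [map_mul, Equiv.Perm.mul_apply, lk_σ, k3, h3]⟩

lemma sum_ind (n a b : ℕ) : 0 ≤ ∑ x ∈ Finset.range n, ind a b x ∧
    ∑ x ∈ Finset.range n, ind a b x ≤ 2 := by
  have hn : ∀ x, 0 ≤ ind a b x := fun x => by unfold ind; split_ifs <;> simp
  refine ⟨Finset.sum_nonneg fun x _ => hn x, ?_⟩
  calc ∑ x ∈ Finset.range n, ind a b x
      ≤ ∑ x ∈ Finset.range n, ((if x = a then 1 else 0) + (if x = b then 1 else 0)) := by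
        refine Finset.sum_le_sum fun x _ => ?_
        unfold ind
        split_ifs <;> simp_all
    _ ≤ 2 := by
        rw [Finset.sum_add_distrib, Finset.sum_ite_eq', Finset.sum_ite_eq']
        split_ifs <;> simp

lemma no_square {β γ : Binf} (hβ : β ∈ BPos) (hγ : γ ∈ BPos) (i n : ℕ)
    (h : β * σ i * σ i * γ = Δ n) : False := by
  obtain ⟨a, b, c, hab, hc, e⟩ := lk_pos' hγ i (i + 1) 0 (by omega)
  obtain ⟨a', b', c', -, hc', e'⟩ := lk_pos hβ i (i + 1) 2 (by omega)
  have e2 : lE i (lE i (ind i (i + 1), 0)) = (ind i (i + 1), 2) := by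
    refine Prod.ext ?_ ?_
    · ext x
      simp only [lE_fst]
      grind
    · simp [lE_snd, lE_fst, ind]
  have key : lk (Δ n) (ind a b, c) = (ind a' b', c') := by
    rw [← h]
    simp only [map_mul, Equiv.Perm.mul_apply, lk_σ]
    rw [e, e2, e']
  obtain ⟨-, -, h3⟩ := lk_Δ n (ind a b, c)
  rw [key] at h3
  have hsq : ∑ x ∈ Finset.range n, ind a b x ^ 2 = ∑ x ∈ Finset.range n, ind a b x :=
    Finset.sum_congr rfl fun x _ => by unfold ind; split_ifs <;> simp
  obtain ⟨s0, s2⟩ := sum_ind n a b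
  simp only [hsq] at h3
  generalize ∑ x ∈ Finset.range n, ind a b x = S at *
  nlinarith

lemma div_simp {β : Binf} (h : β ∈ BPos) :
    ∀ n, ∀ γ ∈ BPos, β * γ = Δ n → Simp' β := by
  induction h using Submonoid.closure_induction_right with
  | one => intros; exact .one
  | mul_right β hβ y hy ih =>
    obtain ⟨i, rfl⟩ := hy
    intro n γ hγ e
    have h1 := ih n (σ i * γ) (mul_mem (σ_mem i) hγ) (by rw [← mul_assoc, e])
    rcases h1.exchange i with h | ⟨y, hy, rfl⟩
    · exact h
    · exact (no_square hy hγ i n e).elim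

/-- a braid admits a special decomposition consisting of
positive braids iff it is a positive simple braid, i.e. a left divisor of
some `Δ_n` in the positive braid monoid. -/
theorem positive_special_decomposition (β : Binf) :
    (∃ l : List Binf, (∀ x ∈ l, x ∈ Special ∧ x ∈ BPos) ∧ β = shProd l) ↔
    (β ∈ BPos ∧ ∃ n : ℕ, ∃ γ ∈ BPos, β * γ = Δ n) := by
  constructor
  · rintro ⟨l, hl, rfl⟩
    have hS : Simp' (shProd l) := by
      induction l with
      | nil => exact .one
      | cons a t ih =>
        obtain ⟨k, rfl⟩ := special_pos (hl a (by simp)).1 (hl a (by simp)).2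
        exact .step k _ (ih fun x hx => hl x (by simp [hx]))
    obtain ⟨N, hN⟩ := hS.div
    exact ⟨hS.pos, N, hN N le_rfl⟩
  · rintro ⟨hβ, n, γ, hγ, e⟩
    have hS := div_simp hβ n γ hγ e
    clear hβ e hγ
    induction hS with
    | one => exact ⟨[], by simp, rfl⟩
    | step k x _ ih =>
      obtain ⟨l, hl, rfl⟩ := ih
      refine ⟨desc k :: l, ?_, rfl⟩
      intro x hx
      rcases List.mem_cons.mp hx with rfl | hx
      · exact ⟨desc_special k, desc_mem k⟩
      · exact hl x hx
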